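/- Let u ∈ W and 1 ≤ j ≤ r. If ℓ(us_j) = ℓ(u) − 1, then gr(q_{α_j^∨}) + gr(us_j) ≤ gr(u) + e_j in the lexicographic order on Z^{r+1}. -/

import Mathlib

/-!
Write `u = z v_j v_{j-1} y`, where `z = v_{r+1} ⋯ v_{j+1}` and `y = v_{j-2} ⋯ v_1`.
Since `y` commutes with `s_j`, and since an element of a coset `w W_S` which is positive on the
simple roots of `S` is unique (`posOn_unique`), the decompositions of `u` and `u s_j` have the same
factors at all indices other than `j - 1` and `j`, and `v_j v_{j-1} s_j = v'_j v'_{j-1}`.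

In type `A` an element of `W_{Δ_m}^{Δ_{m-1}}` is a ladder `s_{m-a+1} ⋯ s_m` with `0 ≤ a ≤ m`
(`PathA.eq_ladder`), so `ℓ(v'_{j-1}) ≤ j - 1`.  Hence at index `j - 1` the left side
`1 - j + ℓ(v'_{j-1})` is at most `0 ≤ ℓ(v_{j-1})`.  If this is strict, the lexicographic comparison
is decided.  Otherwise `v_{j-1} = 1` and `ℓ(v'_{j-1}) = j - 1`; the hypothesis that `s_j` is a
right descent of `u` makes `v_j α_j` negative, so `v_j` is a nontrivial ladder and `v_j s_j` lies in
`W_{Δ_{j-1}}`.  Then `v'_j = 1`, `v'_{j-1} = v_j s_j` and `ℓ(v_j) ≥ j`, which is the comparison at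
index `j` (`PathA.descent_extreme`); the later factors agree.

The Coxeter-theoretic input is the exchange property (`exchange`), which follows from the fact
that `s_i` permutes the positive roots other than `α_i`.
-/

open scoped BigOperators

/-- A reduced crystallographic root system with a fixed base `α_1, …, α_n` of simple
roots, bundled with its Weyl group `W`.  A root `γ` is recorded by its integer
coordinate vector in the basis of simple roots (so the `i`-th simple root is
`Pi.single i 1`), and `cor γ` is the coordinate vector of the coroot `γ^∨` in the
basis of simple coroots (hence `cor γ i = ⟨χ_i, γ^∨⟩` for the fundamental weights
`χ_i`).  `A i j = ⟨α_i, α_j^∨⟩` is the Cartan matrix, `σ γ` is the reflection `s_γ`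
and `act` is the action of the Weyl group on the root lattice. -/
structure RootSystemData (n : ℕ) where
  A : Fin n → Fin n → ℤ
  R : Finset (Fin n → ℤ)
  cor : (Fin n → ℤ) → (Fin n → ℤ)
  W : Type
  [grp : Group W]
  σ : (Fin n → ℤ) → W
  act : W → (Fin n → ℤ) → (Fin n → ℤ)
  simple_mem : ∀ i : Fin n, (Pi.single i 1 : Fin n → ℤ) ∈ R
  root_ne_zero : ∀ γ ∈ R, γ ≠ 0
  neg_mem : ∀ γ ∈ R, -γ ∈ R
  pos_or_neg : ∀ γ ∈ R, (∀ i, 0 ≤ γ i) ∨ (∀ i, γ i ≤ 0)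
  reduced : ∀ γ ∈ R, ∀ k : ℤ, k • γ ∈ R → k = 1 ∨ k = -1
  cor_simple : ∀ i : Fin n, cor (Pi.single i 1) = Pi.single i 1
  cor_neg : ∀ γ ∈ R, cor (-γ) = -(cor γ)
  pair_self : ∀ γ ∈ R, (∑ i, ∑ j, γ i * A i j * cor γ j) = 2
  act_one : ∀ x, act 1 x = x
  act_mul : ∀ w w' x, act (w * w') x = act w (act w' x)
  act_refl : ∀ γ ∈ R, ∀ x, act (σ γ) x = x - (∑ i, ∑ j, x i * A i j * cor γ j) • γ
  act_mem : ∀ (w : W), ∀ γ ∈ R, act w γ ∈ R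
  cor_refl : ∀ γ ∈ R, ∀ β ∈ R,
    cor (act (σ γ) β) = cor β - (∑ i, ∑ j, γ i * A i j * cor β j) • cor γ
  refl_sq : ∀ γ ∈ R, σ γ * σ γ = 1
  refl_act : ∀ (w : W), ∀ γ ∈ R, σ (act w γ) = w * σ γ * w⁻¹
  act_faithful : ∀ w w' : W, (∀ γ ∈ R, act w γ = act w' γ) → w = w'
  generated : ∀ w : W, ∃ l : List (Fin n), w = (l.map fun i => σ (Pi.single i 1)).prod

namespace RootSystemData

instance {n : ℕ} (c : RootSystemData n) : Group c.W := c.grp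

/-- the pairing `⟨x, λ⟩` between an element `x` of the root lattice (coordinates in
the basis of simple roots) and an element `λ` of the coroot lattice (coordinates in
the basis of simple coroots) -/
def pair {n : ℕ} (c : RootSystemData n) (x lam : Fin n → ℤ) : ℤ :=
  ∑ i, ∑ j, x i * c.A i j * lam j

/-- the `i`-th simple root -/
def sroot {n : ℕ} (_c : RootSystemData n) (i : Fin n) : Fin n → ℤ := Pi.single i 1

/-- the simple reflection `s_i` -/
def s {n : ℕ} (c : RootSystemData n) (i : Fin n) : c.W := c.σ (c.sroot i)

/-- `s_{α_{t+1}}` for a `0`-based natural number index `t` (`= 1` when out of range) -/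
def sN {n : ℕ} (c : RootSystemData n) (t : ℕ) : c.W := if h : t < n then c.s ⟨t, h⟩ else 1

/-- `⟨2ρ, λ⟩ = Σ_{β ∈ R^+} ⟨β, λ⟩`, where `ρ` is the half-sum of the positive roots -/
def pairTwoRho {n : ℕ} (c : RootSystemData n) (lam : Fin n → ℤ) : ℤ :=
  ∑ β ∈ c.R, if ∀ i, 0 ≤ β i then c.pair β lam else 0

/-- the length of `w ∈ W` with respect to the simple reflections -/
noncomputable def len {n : ℕ} (c : RootSystemData n) (w : c.W) : ℕ :=
  sInf {k | ∃ l : List (Fin n), l.length = k ∧ (l.map c.s).prod = w}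

/-- the parabolic subgroup `W_S` generated by the simple reflections indexed by `S` -/
def Wsub {n : ℕ} (c : RootSystemData n) (S : Finset (Fin n)) : Subgroup c.W :=
  Subgroup.closure (c.s '' ↑S)

/-- `w ∈ W_T^S`: `w ∈ W_T` and `w` has minimal length in the coset `w W_S` -/
def MinRep {n : ℕ} (c : RootSystemData n) (T S : Finset (Fin n)) (w : c.W) : Prop :=
  w ∈ c.Wsub T ∧ ∀ u ∈ c.Wsub S, c.len w ≤ c.len (w * u)

/-- `w` is the longest element of `W_S` -/
def IsLongest {n : ℕ} (c : RootSystemData n) (S : Finset (Fin n)) (w : c.W) : Prop :=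
  w ∈ c.Wsub S ∧ ∀ v ∈ c.Wsub S, c.len v ≤ c.len w

end RootSystemData

/-- the support of `γ` is contained in `S`, i.e. `γ` lies in the span of
`{α_i : i ∈ S}` (for a root `γ`, membership in `R_S`) -/
def suppIn {n : ℕ} (S : Finset (Fin n)) (γ : Fin n → ℤ) : Prop :=
  ∀ i, i ∉ S → γ i = 0

/-- `Δ_j` for `0 ≤ j ≤ r+1`: the index set of the first `j` simple roots for `j ≤ r`,
and all of `Δ` for `j = r+1`.  (Indices of simple roots are `0`-based, so
`α_1, …, α_j` correspond to the indices `0, …, j-1`.) -/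
def deltaSet (n r j : ℕ) : Finset (Fin n) :=
  if j = r + 1 then Finset.univ else Finset.univ.filter fun i => (i : ℕ) < j

namespace RootSystemData

/-- `v 0, …, v r` (standing for `v_1, …, v_{r+1}`) is the decomposition of `w`
associated to `(Δ_P, Υ)`:  each `v_i ∈ W_{Δ_i}^{Δ_{i-1}}` and `w = v_{r+1} v_r ⋯ v_1`. -/
def IsDecomp {n : ℕ} (c : RootSystemData n) (r : ℕ) (w : c.W)
    (v : Fin (r + 1) → c.W) : Prop :=
  (∀ k : Fin (r + 1), c.MinRep (deltaSet n r ((k : ℕ) + 1)) (deltaSet n r (k : ℕ)) (v k)) ∧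
    w = (List.ofFn v).reverse.prod

/-- the first `m` simple roots `α_1, …, α_m` form a path of type `A_m`:
`⟨α_i, α_j^∨⟩ = -1` if `|i-j| = 1` and `⟨α_i, α_j^∨⟩ = 0` if `|i-j| ≥ 2`. -/
def PathA {n : ℕ} (c : RootSystemData n) (m : ℕ) : Prop :=
  ∀ i j : Fin n, (i : ℕ) < m → (j : ℕ) < m →
    (((i : ℕ) + 1 = (j : ℕ) ∨ (j : ℕ) + 1 = (i : ℕ)) → c.A i j = -1) ∧
    ((i : ℕ) + 2 ≤ (j : ℕ) ∨ (j : ℕ) + 2 ≤ (i : ℕ) → c.A i j = 0)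

/-- `u_{[k,m]} = s_k s_{k+1} ⋯ s_m` (`1`-based indices; `u_{[k,m]} = 1` for `k > m`) -/
def uu {n : ℕ} (c : RootSystemData n) (k m : ℕ) : c.W :=
  ((List.range' k (m + 1 - k)).map fun t => c.sN (t - 1)).prod

/-- `u_i^{(m)} = s_{m-i+1} s_{m-i+2} ⋯ s_m` -/
def uElt {n : ℕ} (c : RootSystemData n) (i m : ℕ) : c.W := c.uu (m - i + 1) m

end RootSystemData

/-- strict lexicographic order on `Fin m → ℤ` -/
def lexLT {m : ℕ} (x y : Fin m → ℤ) : Prop :=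
  ∃ j, x j < y j ∧ ∀ k, k < j → x k = y k

/-- lexicographic order on `Fin m → ℤ` -/
def lexLE {m : ℕ} (x y : Fin m → ℤ) : Prop := x = y ∨ lexLT x y

/-- the grading `gr(q_{α_{j+1}^∨}) ∈ ℤ^{r+1}` (for the `0`-based index `j < r`), when
`Δ_P` is of type `A_r`: in `1`-based terms, `gr(q_{α_1^∨}) = 2·e_1` and
`gr(q_{α_j^∨}) = (1-j)·e_{j-1} + (1+j)·e_j` for `2 ≤ j ≤ r`. -/
def grQ (r j : ℕ) : Fin (r + 1) → ℤ := fun k =>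
  (if (k : ℕ) = j then (j : ℤ) + 2 else 0) + (if (k : ℕ) + 1 = j then -(j : ℤ) else 0)

/-- the grading `gr(q_λ)` for `λ ∈ Q_P^∨` (coordinates in simple coroots), extended
additively from the `gr(q_{α_j^∨})`, when `Δ_P` is of type `A_r` -/
def grQlam (n r : ℕ) (lam : Fin n → ℤ) : Fin (r + 1) → ℤ :=
  fun k => ∑ j, lam j * grQ r (j : ℕ) k

namespace RootSystemData

variable {n : ℕ} (c : RootSystemData n)

/-! ### Roots and the action of simple reflections -/

/-- `γ` has nonnegative coordinates; for a root this means that it is a positive root. -/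
def Pos (γ : Fin n → ℤ) : Prop := ∀ i, 0 ≤ γ i

lemma sroot_mem (i : Fin n) : c.sroot i ∈ c.R := c.simple_mem i

lemma pos_sroot (i : Fin n) : Pos (c.sroot i) := by
  intro k
  by_cases h : k = i <;> simp [sroot, h]

lemma not_pos_neg {γ : Fin n → ℤ} (hγ : γ ∈ c.R) (h : Pos γ) : ¬ Pos (-γ) := by
  intro h'
  refine c.root_ne_zero γ hγ (funext fun i => ?_)
  have h1 := h i
  have h2 := h' i
  simp only [Pi.neg_apply] at h2
  simp only [Pi.zero_apply]
  omega

lemma pos_neg_of_not_pos {γ : Fin n → ℤ} (hγ : γ ∈ c.R) (h : ¬ Pos γ) : Pos (-γ) := by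
  rcases c.pos_or_neg γ hγ with h' | h'
  · exact absurd h' h
  · intro i
    have := h' i
    simp only [Pi.neg_apply]
    omega

lemma act_s (i : Fin n) (x : Fin n → ℤ) :
    c.act (c.s i) x = x - (∑ k, x k * c.A k i) • c.sroot i := by
  have h := c.act_refl (c.sroot i) (c.sroot_mem i) x
  rw [s, h]
  have hc : c.cor (c.sroot i) = Pi.single i 1 := c.cor_simple i
  simp [hc, Pi.single_apply]

lemma A_self (i : Fin n) : c.A i i = 2 := by
  have h := c.pair_self _ (c.simple_mem i)
  rw [c.cor_simple] at h
  simpa [Pi.single_apply] using h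

lemma act_s_sroot (i k : Fin n) :
    c.act (c.s i) (c.sroot k) = c.sroot k - c.A k i • c.sroot i := by
  rw [act_s]
  simp [sroot, Pi.single_apply]

lemma act_s_self (i : Fin n) : c.act (c.s i) (c.sroot i) = -c.sroot i := by
  rw [act_s_sroot, A_self, two_smul]
  abel

lemma s_mul_s (i : Fin n) : c.s i * c.s i = 1 := c.refl_sq _ (c.sroot_mem i)

lemma s_inv (i : Fin n) : (c.s i)⁻¹ = c.s i := inv_eq_of_mul_eq_one_left (c.s_mul_s i)

lemma exists_word (w : c.W) : ∃ l : List (Fin n), (l.map c.s).prod = w := by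
  obtain ⟨l, hl⟩ := c.generated w
  exact ⟨l, hl.symm⟩

lemma exists_addHom (w : c.W) :
    ∃ f : (Fin n → ℤ) →+ (Fin n → ℤ), ∀ x, c.act w x = f x := by
  obtain ⟨l, rfl⟩ := c.exists_word w
  induction l with
  | nil => exact ⟨AddMonoidHom.id _, fun x => by simp [c.act_one]⟩
  | cons i l ih =>
    obtain ⟨f, hf⟩ := ih
    have hs : ∀ x y, c.act (c.s i) (x + y) = c.act (c.s i) x + c.act (c.s i) y := by
      intro x y
      simp only [act_s, Pi.add_apply, add_mul, Finset.sum_add_distrib, add_smul]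
      abel
    refine ⟨(AddMonoidHom.mk' _ hs).comp f, fun x => ?_⟩
    simp [c.act_mul, hf]

lemma act_neg (w : c.W) (x : Fin n → ℤ) : c.act w (-x) = -c.act w x := by
  obtain ⟨f, hf⟩ := c.exists_addHom w
  simp [hf]

lemma act_eq_sum (w : c.W) (x : Fin n → ℤ) (k : Fin n) :
    c.act w x k = ∑ i, x i * c.act w (c.sroot i) k := by
  obtain ⟨f, hf⟩ := c.exists_addHom w
  simp only [hf]
  have hx : x = ∑ i, x i • c.sroot i := by
    funext m
    simp [sroot, Pi.single_apply]
  conv_lhs => rw [hx]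
  rw [map_sum, Finset.sum_apply]
  simp only [map_zsmul, Pi.smul_apply, smul_eq_mul]

/-- A simple reflection permutes the positive roots other than its own simple root. -/
lemma pos_act_s (i : Fin n) {γ : Fin n → ℤ} (hγ : γ ∈ c.R) (h : Pos γ)
    (hne : γ ≠ c.sroot i) : Pos (c.act (c.s i) γ) := by
  rcases c.pos_or_neg _ (c.act_mem (c.s i) γ hγ) with h' | h'
  · exact h'
  · exfalso
    have hz : γ = γ i • c.sroot i := by
      funext k
      by_cases hk : k = i
      · subst hk
        simp [sroot]
      · have h1 := h' k
        have h2 := h k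
        simp only [act_s, sroot, Pi.sub_apply, Pi.smul_apply, Pi.single_apply, hk, if_false,
          smul_zero, sub_zero] at h1
        simp only [sroot, Pi.smul_apply, Pi.single_apply, hk, if_false, smul_zero]
        omega
    have hi := h i
    rcases c.reduced _ (c.sroot_mem i) (γ i) (hz ▸ hγ) with h1 | h1
    · rw [h1, one_smul] at hz
      exact hne hz
    · omega

/-! ### Words, the exchange property and lengths -/

/-- Exchange property: if `w` sends `α_i` to a negative root, then a word for `w s_i` is
obtained from any word for `w` by deleting a letter. -/
lemma exchange (l : List (Fin n)) (i : Fin n)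
    (h : ¬ Pos (c.act (l.map c.s).prod (c.sroot i))) :
    ∃ l' : List (Fin n), l'.length + 1 = l.length ∧ (∀ x ∈ l', x ∈ l) ∧
      (l'.map c.s).prod = (l.map c.s).prod * c.s i := by
  induction l with
  | nil => exact absurd (by simpa [c.act_one] using c.pos_sroot i) h
  | cons a t ih =>
    by_cases ht : Pos (c.act (t.map c.s).prod (c.sroot i))
    · have heq : c.act (t.map c.s).prod (c.sroot i) = c.sroot a := by
        by_contra hne
        apply h
        rw [List.map_cons, List.prod_cons, c.act_mul]
        exact c.pos_act_s a (c.act_mem _ _ (c.sroot_mem i)) ht hne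
      have hr := c.refl_act (t.map c.s).prod _ (c.sroot_mem i)
      rw [heq] at hr
      refine ⟨t, rfl, fun x hx => List.mem_cons_of_mem _ hx, ?_⟩
      have hr' : c.s a = (t.map c.s).prod * c.s i * ((t.map c.s).prod)⁻¹ := hr
      rw [List.map_cons, List.prod_cons, hr']
      simp [mul_assoc, c.s_mul_s]
    · obtain ⟨l', h1, h2, h3⟩ := ih ht
      refine ⟨a :: l', by simp [h1], ?_, by simp [h3, mul_assoc]⟩
      intro x hx
      rcases List.mem_cons.1 hx with rfl | hx
      · exact List.mem_cons_self
      · exact List.mem_cons_of_mem _ (h2 x hx)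

lemma len_le (l : List (Fin n)) : c.len (l.map c.s).prod ≤ l.length :=
  Nat.sInf_le ⟨l, rfl, rfl⟩

lemma exists_reduced (w : c.W) :
    ∃ l : List (Fin n), l.length = c.len w ∧ (l.map c.s).prod = w := by
  obtain ⟨l, hl⟩ := c.exists_word w
  exact Nat.sInf_mem (s := {k | ∃ l : List (Fin n), l.length = k ∧ (l.map c.s).prod = w})
    ⟨_, l, rfl, hl⟩

lemma len_one : c.len 1 = 0 := by
  simpa using c.len_le []

lemma eq_one_of_len {w : c.W} (h : c.len w = 0) : w = 1 := by
  obtain ⟨l, h1, h2⟩ := c.exists_reduced w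
  rw [h, List.length_eq_zero_iff] at h1
  simpa [h1] using h2.symm

lemma len_s_mul_le (i : Fin n) (w : c.W) : c.len (c.s i * w) ≤ c.len w + 1 := by
  obtain ⟨l, h1, h2⟩ := c.exists_reduced w
  simpa [h1, h2] using c.len_le (i :: l)

lemma len_mul_s_of_not_pos {w : c.W} {i : Fin n} (h : ¬ Pos (c.act w (c.sroot i))) :
    c.len (w * c.s i) + 1 ≤ c.len w := by
  obtain ⟨l, h1, rfl⟩ := c.exists_reduced w
  obtain ⟨l', h2, -, h3⟩ := c.exchange l i h
  have := c.len_le l'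
  rw [h3] at this
  omega

lemma not_pos_of_len {w : c.W} {i : Fin n} (h : c.len (w * c.s i) + 1 = c.len w) :
    ¬ Pos (c.act w (c.sroot i)) := by
  intro hp
  have h1 : ¬ Pos (c.act (w * c.s i) (c.sroot i)) := by
    rw [c.act_mul, c.act_s_self, c.act_neg]
    exact c.not_pos_neg (c.act_mem _ _ (c.sroot_mem i)) hp
  have h2 := c.len_mul_s_of_not_pos h1
  rw [mul_assoc, c.s_mul_s, mul_one] at h2
  omega

/-! ### Parabolic subgroups and minimal coset representatives -/

lemma s_mem_Wsub {S : Finset (Fin n)} {i : Fin n} (hi : i ∈ S) : c.s i ∈ c.Wsub S :=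
  Subgroup.subset_closure ⟨i, hi, rfl⟩

lemma Wsub_mono {S T : Finset (Fin n)} (h : S ⊆ T) : c.Wsub S ≤ c.Wsub T :=
  Subgroup.closure_mono (Set.image_mono (by exact_mod_cast h))

lemma prod_mem_Wsub {S : Finset (Fin n)} {l : List (Fin n)} (h : ∀ i ∈ l, i ∈ S) :
    (l.map c.s).prod ∈ c.Wsub S := by
  apply Subgroup.list_prod_mem
  intro x hx
  obtain ⟨i, hi, rfl⟩ := List.mem_map.1 hx
  exact c.s_mem_Wsub (h i hi)

lemma exists_word_Wsub {S : Finset (Fin n)} {w : c.W} (h : w ∈ c.Wsub S) :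
    ∃ l : List (Fin n), (∀ i ∈ l, i ∈ S) ∧ (l.map c.s).prod = w := by
  have key : ∀ i ∈ S, ∀ y : c.W, (∃ l : List (Fin n), (∀ i ∈ l, i ∈ S) ∧ (l.map c.s).prod = y) →
      ∃ l : List (Fin n), (∀ i ∈ l, i ∈ S) ∧ (l.map c.s).prod = c.s i * y := by
    rintro i hi y ⟨l, h1, h2⟩
    refine ⟨i :: l, ?_, by simp [h2]⟩
    intro x hx
    rcases List.mem_cons.1 hx with rfl | hx
    · exact hi
    · exact h1 x hx
  induction h using Subgroup.closure_induction_left with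
  | one => exact ⟨[], by simp, by simp⟩
  | mul_left x hx y hy ih =>
    obtain ⟨i, hi, rfl⟩ := hx
    exact key i hi y ih
  | inv_mul_cancel x hx y hy ih =>
    obtain ⟨i, hi, rfl⟩ := hx
    rw [s_inv]
    exact key i hi y ih

lemma Wsub_induction {S : Finset (Fin n)} {p : c.W → Prop} (h1 : p 1)
    (hm : ∀ i ∈ S, ∀ y, p y → p (c.s i * y)) {w : c.W} (h : w ∈ c.Wsub S) : p w := by
  obtain ⟨l, hl, rfl⟩ := c.exists_word_Wsub h
  induction l with
  | nil => simpa using h1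
  | cons i l ih =>
    rw [List.map_cons, List.prod_cons]
    have htail : ∀ x ∈ l, x ∈ S := fun x hx => hl x (List.mem_cons_of_mem _ hx)
    exact hm i (hl i List.mem_cons_self) _ (ih htail (c.prod_mem_Wsub htail))

/-- `W_S` changes only the coordinates indexed by `S`. -/
lemma act_Wsub_apply {S : Finset (Fin n)} {w : c.W} (h : w ∈ c.Wsub S) (x : Fin n → ℤ)
    {k : Fin n} (hk : k ∉ S) : c.act w x k = x k := by
  refine c.Wsub_induction (p := fun w => c.act w x k = x k) (by rw [c.act_one]) ?_ h
  intro i hi y hy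
  have hki : k ≠ i := fun e => hk (e ▸ hi)
  rw [c.act_mul, c.act_s, ← hy]
  simp [sroot, hki]

lemma suppIn_act {S : Finset (Fin n)} {w : c.W} (h : w ∈ c.Wsub S) {x : Fin n → ℤ}
    (hx : suppIn S x) : suppIn S (c.act w x) := fun k hk => by
  rw [c.act_Wsub_apply h x hk, hx k hk]

lemma suppIn_sroot {S : Finset (Fin n)} {i : Fin n} (hi : i ∈ S) : suppIn S (c.sroot i) := by
  intro k hk
  have hki : k ≠ i := fun e => hk (e ▸ hi)
  simp [sroot, hki]

/-- `w` sends the simple roots indexed by `S` to positive roots. -/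
def PosOn (S : Finset (Fin n)) (w : c.W) : Prop := ∀ i ∈ S, Pos (c.act w (c.sroot i))

lemma PosOn.pos {c : RootSystemData n} {S : Finset (Fin n)} {w : c.W} (h : c.PosOn S w)
    {γ : Fin n → ℤ} (hγ : Pos γ) (hs : suppIn S γ) : Pos (c.act w γ) := by
  intro k
  rw [c.act_eq_sum]
  refine Finset.sum_nonneg fun i _ => ?_
  by_cases hi : i ∈ S
  · exact mul_nonneg (hγ i) (h i hi k)
  · simp [hs i hi]

lemma MinRep.posOn {c : RootSystemData n} {T S : Finset (Fin n)} {w : c.W}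
    (h : c.MinRep T S w) : c.PosOn S w := by
  intro i hi
  by_contra hp
  have h1 := c.len_mul_s_of_not_pos hp
  have h2 := h.2 _ (c.s_mem_Wsub hi)
  omega

lemma eq_one_of_posOn {S : Finset (Fin n)} {y : c.W} (hy : y ∈ c.Wsub S)
    (h : c.PosOn S y) : y = 1 := by
  obtain ⟨l, hl, hly⟩ := c.exists_word_Wsub hy
  induction hN : l.length using Nat.strong_induction_on generalizing l with
  | _ N ih =>
    rcases List.eq_nil_or_concat l with rfl | ⟨t, i, rfl⟩
    · simpa using hly.symm
    · have hyt : (t.map c.s).prod * c.s i = y := by simpa using hly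
      have ht : (t.map c.s).prod = y * c.s i := by
        rw [← hyt, mul_assoc, c.s_mul_s, mul_one]
      have hi : i ∈ S := hl i (by simp)
      have hn : ¬ Pos (c.act (t.map c.s).prod (c.sroot i)) := by
        rw [ht, c.act_mul, c.act_s_self, c.act_neg]
        exact c.not_pos_neg (c.act_mem _ _ (c.sroot_mem i)) (h i hi)
      obtain ⟨l', h1, h2, h3⟩ := c.exchange t i hn
      refine ih l'.length ?_ l' (fun x hx => hl x ?_) (h3.trans hyt) rfl
      · simp only [List.length_append, List.length_cons, List.length_nil,
          List.concat_eq_append] at hN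
        omega
      · simpa using Or.inl (h2 x hx)

/-- A coset of `W_S` contains at most one element that is positive on `S`. -/
lemma posOn_unique {S : Finset (Fin n)} {z z' y y' : c.W} (hz : c.PosOn S z)
    (hz' : c.PosOn S z') (hy : y ∈ c.Wsub S) (hy' : y' ∈ c.Wsub S)
    (h : z * y = z' * y') : z = z' ∧ y = y' := by
  have hg : y * y'⁻¹ ∈ c.Wsub S := mul_mem hy (inv_mem hy')
  have hzg : z' = z * (y * y'⁻¹) := by rw [← mul_assoc, h, mul_inv_cancel_right]
  have h1 : y * y'⁻¹ = 1 := by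
    refine c.eq_one_of_posOn hg fun i hi => ?_
    by_contra hp
    have hp' := c.pos_neg_of_not_pos (c.act_mem _ _ (c.sroot_mem i)) hp
    have hs : suppIn S (-c.act (y * y'⁻¹) (c.sroot i)) := by
      intro k hk
      simp [c.suppIn_act hg (c.suppIn_sroot hi) k hk]
    have h2 := hz.pos hp' hs
    rw [c.act_neg, ← c.act_mul, ← hzg] at h2
    exact c.not_pos_neg (c.act_mem _ _ (c.sroot_mem i)) (hz' i hi) h2
  rw [h1, mul_one] at hzg
  exact ⟨hzg.symm, mul_inv_eq_one.1 h1⟩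

/-! ### Type `A`: minimal representatives of consecutive parabolics -/

lemma sN_eq {t : ℕ} (h : t < n) : c.sN t = c.s ⟨t, h⟩ := by simp [sN, h]

lemma sN_mul_sN (t : ℕ) : c.sN t * c.sN t = 1 := by
  unfold sN
  split_ifs
  · exact c.s_mul_s _
  · simp

lemma s_comm {i k : Fin n} (h : c.A k i = 0) : c.s i * c.s k = c.s k * c.s i := by
  have hr := c.refl_act (c.s i) _ (c.sroot_mem k)
  rw [c.act_s_sroot, h, zero_smul, sub_zero] at hr
  exact (eq_mul_inv_iff_mul_eq.1 hr).symm

lemma s_braid {i k : Fin n} (h : c.A i k = -1) (h' : c.A k i = -1) :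
    c.s k * (c.s i * c.s k) = c.s i * (c.s k * c.s i) := by
  have hr := c.refl_act (c.s i * c.s k) _ (c.sroot_mem i)
  have hact : c.act (c.s i * c.s k) (c.sroot i) = c.sroot k := by
    rw [c.act_mul, c.act_s_sroot, h, c.act_s]
    funext m
    simp [sroot, Pi.single_apply, add_mul, Finset.sum_add_distrib, c.A_self, h']
  rw [hact] at hr
  have hr' : c.s k = c.s i * c.s k * c.s i * (c.s i * c.s k)⁻¹ := hr
  rw [eq_mul_inv_iff_mul_eq] at hr'
  rw [hr', mul_assoc]

variable {c} {r : ℕ}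

lemma PathA.sN_comm (hA : c.PathA r) (hrn : r < n) {i k : ℕ} (hi : i < r) (hk : k < r)
    (h : i + 2 ≤ k ∨ k + 2 ≤ i) : c.sN i * c.sN k = c.sN k * c.sN i := by
  rw [c.sN_eq (hi.trans hrn), c.sN_eq (hk.trans hrn)]
  exact c.s_comm ((hA ⟨k, hk.trans hrn⟩ ⟨i, hi.trans hrn⟩ hk hi).2 h.symm)

lemma PathA.sN_braid (hA : c.PathA r) (hrn : r < n) {i : ℕ} (hi : i + 1 < r) :
    c.sN (i + 1) * (c.sN i * c.sN (i + 1)) = c.sN i * (c.sN (i + 1) * c.sN i) := by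
  have hi' : i < r := by omega
  rw [c.sN_eq (hi.trans hrn), c.sN_eq (hi'.trans hrn)]
  exact c.s_braid ((hA ⟨i, hi'.trans hrn⟩ ⟨i + 1, hi.trans hrn⟩ hi' hi).1 (Or.inl rfl))
    ((hA ⟨i + 1, hi.trans hrn⟩ ⟨i, hi'.trans hrn⟩ hi hi').1 (Or.inr rfl))

variable (c)

/-- The word of length `a` ending in the `m`-th simple reflection: with `0`-based indices,
`ladder m a = s_{m-a} s_{m-a+1} ⋯ s_{m-1}`, meant for `a ≤ m`. -/
def ladder (m : ℕ) : ℕ → c.W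
  | 0 => 1
  | a + 1 => c.sN (m - (a + 1)) * ladder m a

lemma len_ladder {m : ℕ} (hm : m ≤ n) (hm0 : 0 < m) (a : ℕ) : c.len (c.ladder m a) ≤ a := by
  induction a with
  | zero => simp [ladder, c.len_one]
  | succ a ih =>
    rw [ladder, c.sN_eq (show m - (a + 1) < n by omega)]
    exact (c.len_s_mul_le _ _).trans (by omega)

variable {c}

lemma PathA.ladder_comm (hA : c.PathA r) (hrn : r < n) {m : ℕ} (hm : m ≤ r) (a : ℕ) {i : ℕ}
    (h : i + a + 1 < m) : c.sN i * c.ladder m a = c.ladder m a * c.sN i := by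
  induction a with
  | zero => simp [ladder]
  | succ a ih =>
    rw [ladder, ← mul_assoc, hA.sN_comm hrn (by omega) (by omega) (by omega), mul_assoc,
      ih (by omega), mul_assoc]

lemma PathA.ladder_shift (hA : c.PathA r) (hrn : r < n) {m : ℕ} (hm : m ≤ r) (a : ℕ) {i : ℕ}
    (ham : a ≤ m) (him : i + 1 < m) (h : m < i + 1 + a) :
    c.sN (i + 1) * c.ladder m a = c.ladder m a * c.sN i := by
  induction a with
  | zero => omega
  | succ a ih =>
    by_cases hia : m < i + 1 + a
    · rw [ladder, ← mul_assoc, hA.sN_comm hrn (by omega) (by omega) (by omega), mul_assoc,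
        ih (by omega) hia, mul_assoc]
    · obtain ⟨b, rfl⟩ : ∃ b, a = b + 1 := ⟨a - 1, by omega⟩
      have e1 : m - (b + 1 + 1) = i := by omega
      have e2 : m - (b + 1) = i + 1 := by omega
      rw [ladder, ladder, e1, e2, mul_assoc, mul_assoc, ← hA.ladder_comm hrn hm b (by omega)]
      have := hA.sN_braid hrn (i := i) (by omega)
      calc c.sN (i + 1) * (c.sN i * (c.sN (i + 1) * c.ladder m b))
          = (c.sN (i + 1) * (c.sN i * c.sN (i + 1))) * c.ladder m b := by simp only [mul_assoc]
        _ = _ := by rw [this]; simp only [mul_assoc]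

lemma mem_deltaSet {m : ℕ} (hm : m ≤ r) {i : Fin n} : i ∈ deltaSet n r m ↔ (i : ℕ) < m := by
  have : m ≠ r + 1 := by omega
  simp [deltaSet, this]

lemma deltaSet_mono {k m : ℕ} (hkm : k ≤ m) (hm : m ≤ r + 1) :
    deltaSet n r k ⊆ deltaSet n r m := by
  intro i hi
  by_cases h : m = r + 1
  · simp [deltaSet, h]
  · rw [mem_deltaSet (by omega)] at hi ⊢
    omega

lemma sN_mem (hrn : r < n) {m t : ℕ} (hm : m ≤ r) (ht : t < m) :
    c.sN t ∈ c.Wsub (deltaSet n r m) := by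
  rw [c.sN_eq (show t < n by omega)]
  exact c.s_mem_Wsub ((mem_deltaSet hm).2 ht)

/-- Any word in the first `m + 1` simple reflections can be rewritten, without growing, as a
ladder followed by a word in the first `m` simple reflections. -/
lemma PathA.exists_ladder (hA : c.PathA r) (hrn : r < n) {m : ℕ} (hm : m + 1 ≤ r)
    (l : List (Fin n)) (hl : ∀ i ∈ l, (i : ℕ) < m + 1) :
    ∃ a ≤ m + 1, ∃ l' : List (Fin n), (∀ i ∈ l', (i : ℕ) < m) ∧
      (l.map c.s).prod = c.ladder (m + 1) a * (l'.map c.s).prod ∧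
      a + l'.length ≤ l.length := by
  induction l with
  | nil => exact ⟨0, by omega, [], by simp, by simp [ladder], by simp⟩
  | cons i t ih =>
    obtain ⟨a, ha, l', h1, h2, h3⟩ := ih fun x hx => hl x (List.mem_cons_of_mem _ hx)
    have hi : (i : ℕ) < m + 1 := hl i List.mem_cons_self
    have hsi : c.s i = c.sN i := by rw [c.sN_eq i.2]
    rw [List.map_cons, List.prod_cons, h2, hsi, List.length_cons]
    have hcons : ∀ k : Fin n, (k : ℕ) < m → ∀ x ∈ k :: l', (x : ℕ) < m := by
      intro k hk x hx
      rcases List.mem_cons.1 hx with rfl | hx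
      · exact hk
      · exact h1 x hx
    rcases lt_trichotomy ((i : ℕ) + a) m with hlt | heq | hgt
    · refine ⟨a, ha, i :: l', hcons i (by omega), ?_, by simp; omega⟩
      rw [← mul_assoc, hA.ladder_comm hrn hm a (by omega), List.map_cons, List.prod_cons, hsi,
        mul_assoc]
    · refine ⟨a + 1, by omega, l', h1, ?_, by omega⟩
      rw [ladder, show m + 1 - (a + 1) = (i : ℕ) by omega, mul_assoc]
    · by_cases hia : (i : ℕ) + a = m + 1
      · obtain ⟨b, rfl⟩ : ∃ b, a = b + 1 := ⟨a - 1, by omega⟩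
        refine ⟨b, by omega, l', h1, ?_, by omega⟩
        rw [ladder, show m + 1 - (b + 1) = (i : ℕ) by omega, ← mul_assoc, ← mul_assoc,
          c.sN_mul_sN, one_mul]
      · obtain ⟨k, hk⟩ : ∃ k, (i : ℕ) = k + 1 := ⟨i - 1, by omega⟩
        have hkn : k < n := by omega
        refine ⟨a, ha, ⟨k, hkn⟩ :: l', hcons _ (by simp; omega), ?_, by simp; omega⟩
        rw [hk, ← mul_assoc, hA.ladder_shift hrn hm a ha (by omega) (by omega), List.map_cons,
          List.prod_cons, c.sN_eq hkn, mul_assoc]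

/-- In type `A` the elements of `W_{Δ_{m+1}}` positive on `Δ_m` are the ladders.  A shortest word
representing an element of the coset `w W_{Δ_m}` is positive on `Δ_m`, so it represents `w`; when it
is rewritten by `exists_ladder`, minimality leaves no room for a tail. -/
lemma PathA.eq_ladder (hA : c.PathA r) (hrn : r < n) {m : ℕ} (hm : m + 1 ≤ r) {w : c.W}
    (hw : w ∈ c.Wsub (deltaSet n r (m + 1))) (hp : c.PosOn (deltaSet n r m) w) :
    ∃ a ≤ m + 1, w = c.ladder (m + 1) a := by
  classical
  let Q : ℕ → Prop := fun N => ∃ l : List (Fin n), l.length = N ∧ (∀ i ∈ l, (i : ℕ) < m + 1) ∧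
    w⁻¹ * (l.map c.s).prod ∈ c.Wsub (deltaSet n r m)
  have hQ : ∃ N, Q N := by
    obtain ⟨l, h1, h2⟩ := c.exists_word_Wsub hw
    exact ⟨_, l, rfl, fun i hi => (mem_deltaSet hm).1 (h1 i hi), by simp [h2, one_mem]⟩
  obtain ⟨l, h1, h2, h3⟩ := Nat.find_spec hQ
  have hmin : ∀ l' : List (Fin n), (∀ i ∈ l', (i : ℕ) < m + 1) →
      w⁻¹ * (l'.map c.s).prod ∈ c.Wsub (deltaSet n r m) → l.length ≤ l'.length :=
    fun l' h4 h5 => h1 ▸ Nat.find_min' hQ ⟨l', rfl, h4, h5⟩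
  have hlp : c.PosOn (deltaSet n r m) (l.map c.s).prod := by
    intro i hi
    by_contra hn
    obtain ⟨l', h4, h5, h6⟩ := c.exchange l i hn
    have := hmin l' (fun x hx => h2 x (h5 x hx))
      (by rw [h6, ← mul_assoc]; exact mul_mem h3 (c.s_mem_Wsub hi))
    omega
  have hlw : (l.map c.s).prod = w :=
    (c.posOn_unique hlp hp (one_mem _) h3 (by group)).1
  obtain ⟨a, ha, l', h4, h5, h6⟩ := hA.exists_ladder hrn hm l h2
  have hl' : (l'.map c.s).prod ∈ c.Wsub (deltaSet n r m) :=
    c.prod_mem_Wsub fun i hi => (mem_deltaSet (by omega)).2 (h4 i hi)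
  -- The ladder is itself represented by a word of length `a` in the coset.
  have hlad : ∀ b ≤ m + 1, ∃ k : List (Fin n), k.length = b ∧ (∀ i ∈ k, (i : ℕ) < m + 1) ∧
      (k.map c.s).prod = c.ladder (m + 1) b := by
    intro b hb
    induction b with
    | zero => exact ⟨[], rfl, by simp, by simp [ladder]⟩
    | succ b ih =>
      obtain ⟨k, hk1, hk2, hk3⟩ := ih (by omega)
      have hbn : m + 1 - (b + 1) < n := by omega
      refine ⟨⟨m + 1 - (b + 1), hbn⟩ :: k, by simp [hk1], ?_, ?_⟩
      · intro x hx
        rcases List.mem_cons.1 hx with rfl | hx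
        · simp
        · exact hk2 x hx
      · rw [List.map_cons, List.prod_cons, hk3, ladder, c.sN_eq hbn]
  obtain ⟨k, hk1, hk2, hk3⟩ := hlad a ha
  have hle := hmin k hk2 (by
    rw [hk3, ← hlw, h5, mul_inv_rev, mul_assoc, inv_mul_cancel, mul_one]
    exact inv_mem hl')
  have hnil : l' = [] := List.length_eq_zero_iff.1 (by omega)
  exact ⟨a, ha, by rw [← hlw, h5, hnil]; simp⟩

lemma PathA.len_le_of_posOn (hA : c.PathA r) (hrn : r < n) {m : ℕ} (hm : m + 1 ≤ r) {w : c.W}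
    (hw : w ∈ c.Wsub (deltaSet n r (m + 1))) (hp : c.PosOn (deltaSet n r m) w) :
    c.len w ≤ m + 1 := by
  obtain ⟨a, ha, rfl⟩ := hA.eq_ladder hrn hm hw hp
  exact (c.len_ladder (by omega) (by omega) a).trans ha

lemma ladder_mul_mem (hrn : r < n) {m : ℕ} (hm : m + 1 ≤ r) (a : ℕ) (ha : a ≤ m) :
    c.ladder (m + 1) (a + 1) * c.sN m ∈ c.Wsub (deltaSet n r m) := by
  induction a with
  | zero => simp [ladder, c.sN_mul_sN, one_mem]
  | succ a ih =>
    rw [ladder, mul_assoc]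
    exact mul_mem (sN_mem hrn (by omega) (by omega)) (ih (by omega))

/-- A minimal representative `p` with `p α_m` negative (`0`-based) is a nontrivial ladder, so
`p s_m` lies in the smaller parabolic subgroup and its decomposition `p' q'` has `p' = 1`. -/
lemma PathA.descent_extreme (hA : c.PathA r) (hrn : r < n) {m : ℕ} (hm : m + 1 ≤ r)
    {p p' q' : c.W}
    (hp : c.MinRep (deltaSet n r (m + 1)) (deltaSet n r m) p)
    (hp' : c.MinRep (deltaSet n r (m + 1)) (deltaSet n r m) p')
    (hq' : q' ∈ c.Wsub (deltaSet n r m))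
    (hd : ¬ Pos (c.act p (c.sroot ⟨m, by omega⟩)))
    (h : p * c.sN m = p' * q') :
    p' = 1 ∧ c.len q' + 1 ≤ c.len p := by
  obtain ⟨a, ha, hpa⟩ := hA.eq_ladder hrn hm hp.1 hp.posOn
  rcases a with _ | a
  · exact absurd (by rw [hpa, ladder, c.act_one]; exact c.pos_sroot _) hd
  · have hmem : p * c.sN m ∈ c.Wsub (deltaSet n r m) := hpa ▸ ladder_mul_mem hrn hm a (by omega)
    have h1 : c.PosOn (deltaSet n r m) 1 := fun i _ => by
      rw [c.act_one]
      exact c.pos_sroot i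
    obtain ⟨e1, e2⟩ := c.posOn_unique h1 hp'.posOn hmem hq' (by rw [one_mul, h])
    refine ⟨e1.symm, ?_⟩
    rw [← e2, c.sN_eq (show m < n by omega)]
    exact c.len_mul_s_of_not_pos hd

/-! ### The factorisation along the chain of parabolics -/

/-- The partial products `g (m-1) ⋯ g 1 g 0`. -/
def partialProd {G : Type*} [Group G] (g : ℕ → G) : ℕ → G
  | 0 => 1
  | m + 1 => g m * partialProd g m

lemma reverse_prod_eq {G : Type*} [Group G] (g : ℕ → G) (m : ℕ) :
    (List.ofFn fun k : Fin m => g k).reverse.prod = partialProd g m := by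
  induction m with
  | zero => simp [partialProd]
  | succ m ih =>
    rw [List.ofFn_succ', List.concat_eq_append, List.reverse_append, List.prod_append]
    simp [partialProd, ih]

/-- The factors `g 0, …, g r` lie in the prescribed sets of minimal representatives. -/
def Chain (c : RootSystemData n) (r : ℕ) (g : ℕ → c.W) : Prop :=
  ∀ k ≤ r, c.MinRep (deltaSet n r (k + 1)) (deltaSet n r k) (g k)

lemma Chain.partialProd_mem {g : ℕ → c.W} (hg : Chain c r g) {m : ℕ} (hm : m ≤ r + 1) :
    partialProd g m ∈ c.Wsub (deltaSet n r m) := by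
  induction m with
  | zero => exact one_mem _
  | succ m ih =>
    exact mul_mem (hg m (by omega)).1
      (c.Wsub_mono (deltaSet_mono (by omega) hm) (ih (by omega)))

lemma Chain.unique_down {g g' : ℕ → c.W} (hg : Chain c r g) (hg' : Chain c r g') {x : c.W}
    {j : ℕ} (hx : x ∈ c.Wsub (deltaSet n r j)) (d : ℕ) (hd : j + d ≤ r + 1)
    (h : partialProd g (j + d) * x = partialProd g' (j + d)) :
    partialProd g j * x = partialProd g' j ∧ ∀ k, j ≤ k → k < j + d → g k = g' k := by
  induction d with
  | zero => exact ⟨h, fun k h1 h2 => by omega⟩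
  | succ d ih =>
    have h' : g (j + d) * (partialProd g (j + d) * x) = g' (j + d) * partialProd g' (j + d) := by
      rw [← mul_assoc]
      exact h
    obtain ⟨e1, e2⟩ := c.posOn_unique (hg (j + d) (by omega)).posOn
      (hg' (j + d) (by omega)).posOn
      (mul_mem (hg.partialProd_mem (by omega))
        (c.Wsub_mono (deltaSet_mono (by omega) (by omega)) hx))
      (hg'.partialProd_mem (by omega)) h'
    obtain ⟨e3, e4⟩ := ih (by omega) e2
    refine ⟨e3, fun k h1 h2 => ?_⟩
    rcases Nat.lt_succ_iff_lt_or_eq.1 (show k < j + d + 1 by omega) with h3 | rfl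
    · exact e4 k h1 h3
    · exact e1

/-- If the product of the lowest `j` factors keeps `α_i ∈ Δ_j` positive, so do the longer products:
each further factor is positive on a parabolic containing the root reached so far. -/
lemma Chain.pos_up {g : ℕ → c.W} (hg : Chain c r g) {j : ℕ} {i : Fin n} {d : ℕ}
    (hi : i ∈ deltaSet n r j) (hd : j + d ≤ r + 1)
    (h : Pos (c.act (partialProd g j) (c.sroot i))) :
    Pos (c.act (partialProd g (j + d)) (c.sroot i)) := by
  induction d with
  | zero => exact h
  | succ d ih =>
    have e : partialProd g (j + (d + 1)) = g (j + d) * partialProd g (j + d) := rfl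
    rw [e, c.act_mul]
    refine (hg (j + d) (by omega)).posOn.pos (ih (by omega)) ?_
    exact c.suppIn_act (hg.partialProd_mem (by omega))
      (c.suppIn_sroot (deltaSet_mono (by omega) (by omega) hi))

lemma PathA.act_sN_sroot (hA : c.PathA r) (hrn : r < n) {t : ℕ} (ht : t < r) {i : Fin n}
    (hi : (i : ℕ) < r) (h : (i : ℕ) + 2 ≤ t ∨ t + 2 ≤ (i : ℕ)) :
    c.act (c.sN t) (c.sroot i) = c.sroot i := by
  rw [c.sN_eq (ht.trans hrn), c.act_s_sroot, (hA i ⟨t, ht.trans hrn⟩ hi ht).2 h]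
  simp

/-- With `0`-based indices, the group generated by `s_0, …, s_{t-1}` commutes with `s_{t+1}` and
fixes `α_{t+1}`. -/
lemma PathA.commute_fix (hA : c.PathA r) (hrn : r < n) {t : ℕ} (ht : t + 1 < r) {y : c.W}
    (hy : y ∈ c.Wsub (deltaSet n r t)) :
    y * c.sN (t + 1) = c.sN (t + 1) * y ∧
      c.act y (c.sroot ⟨t + 1, by omega⟩) = c.sroot ⟨t + 1, by omega⟩ := by
  refine c.Wsub_induction (p := fun y => y * c.sN (t + 1) = c.sN (t + 1) * y ∧
      c.act y (c.sroot ⟨t + 1, by omega⟩) = c.sroot ⟨t + 1, by omega⟩)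
    ⟨by simp, c.act_one _⟩ ?_ hy
  rintro i hi y ⟨h1, h2⟩
  rw [mem_deltaSet (by omega)] at hi
  have hsi : c.s i = c.sN i := by rw [c.sN_eq i.2]
  rw [c.act_mul, h2, hsi]
  refine ⟨?_, hA.act_sN_sroot hrn (by omega) ht (Or.inr (by simp; omega))⟩
  rw [mul_assoc, h1, ← mul_assoc, hA.sN_comm hrn (by omega) ht (by omega), mul_assoc]

end RootSystemData

open RootSystemData

/-- Let `u ∈ W` and `1 ≤ j ≤ r` with `ℓ(u s_j) = ℓ(u) - 1`.  Then
`gr(q_{α_j^∨}) + gr(u s_j) ≤ gr(u) + e_j` in the lexicographic order on `ℤ^{r+1}`. -/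
theorem gr_q_simple_descent {n : ℕ} (c : RootSystemData n)
    (r : ℕ) (hr1 : 1 ≤ r) (hrn : r < n) (hA : c.PathA r)
    (j : ℕ) (hj1 : 1 ≤ j) (hjr : j ≤ r)
    (u : c.W) (hlen : c.len (u * c.sN (j - 1)) + 1 = c.len u)
    (v v' : Fin (r + 1) → c.W)
    (hv : c.IsDecomp r u v) (hv' : c.IsDecomp r (u * c.sN (j - 1)) v') :
    lexLE (fun k => grQ r (j - 1) k + (c.len (v' k) : ℤ))
      (fun k => (c.len (v k) : ℤ) + if (k : ℕ) = j - 1 then 1 else 0) := by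
  obtain ⟨t, rfl⟩ : ∃ t, j = t + 1 := ⟨j - 1, by omega⟩
  simp only [Nat.add_sub_cancel] at hv' hlen ⊢
  -- Extend both families of factors to `ℕ`.
  obtain ⟨g, hgv⟩ : ∃ g : ℕ → c.W, ∀ k : Fin (r + 1), v k = g k :=
    ⟨fun k => if h : k < r + 1 then v ⟨k, h⟩ else 1, fun k => by simp only [k.2, dif_pos]⟩
  obtain ⟨g', hgv'⟩ : ∃ g' : ℕ → c.W, ∀ k : Fin (r + 1), v' k = g' k :=
    ⟨fun k => if h : k < r + 1 then v' ⟨k, h⟩ else 1, fun k => by simp only [k.2, dif_pos]⟩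
  obtain rfl : v = fun k : Fin (r + 1) => g k := funext hgv
  obtain rfl : v' = fun k : Fin (r + 1) => g' k := funext hgv'
  have hg : Chain c r g := fun k hk => hv.1 ⟨k, by omega⟩
  have hg' : Chain c r g' := fun k hk => hv'.1 ⟨k, by omega⟩
  have hu : u = partialProd g (r + 1) := hv.2.trans (reverse_prod_eq g (r + 1))
  have hu' : u * c.sN t = partialProd g' (r + 1) := hv'.2.trans (reverse_prod_eq g' (r + 1))
  obtain ⟨d, hd⟩ : ∃ d, r + 1 = t + 1 + d := ⟨r - t, by omega⟩
  have htn : t < n := by omega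
  have htmem : (⟨t, htn⟩ : Fin n) ∈ deltaSet n r (t + 1) :=
    (mem_deltaSet (by omega)).2 (Nat.lt_succ_self t)
  have hdesc : ¬ Pos (c.act (partialProd g (t + 1)) (c.sroot ⟨t, htn⟩)) := by
    intro hp
    rw [c.sN_eq htn] at hlen
    refine c.not_pos_of_len hlen ?_
    rw [hu, hd]
    exact hg.pos_up htmem (by omega) hp
  obtain ⟨heq, hhigh⟩ := hg.unique_down hg' (sN_mem hrn hjr (Nat.lt_succ_self t)) d (by omega)
    (by rw [← hd, ← hu, hu'])
  rw [← hd] at hhigh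
  rcases t with _ | t
  · -- Here `v_1 ∈ {1, s_1}`, and there is no factor below it.
    have h0 : g 0 * c.sN 0 = g' 0 * 1 := by simpa [partialProd] using heq
    obtain ⟨e1, e2⟩ := hA.descent_extreme hrn hjr (hg 0 (by omega)) (hg' 0 (by omega))
      (one_mem _) (by simpa [partialProd] using hdesc) h0
    rw [c.len_one] at e2
    have hge : (if (0 : ℕ) = 0 then (2 : ℤ) else 0) + c.len (g' 0) ≤ c.len (g 0) + 1 := by
      rw [e1, c.len_one]
      simp
      omega
    rcases hge.lt_or_eq with hlt | hEq
    · refine Or.inr ⟨0, ?_, fun k hk => absurd hk (by simp)⟩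
      simpa [grQ] using hlt
    · refine Or.inl (funext fun k => ?_)
      by_cases hk : (k : ℕ) = 0
      · simpa [grQ, hk] using hEq
      · simp [grQ, hk, hhigh k (by omega) k.2]
  · have hy := hg.partialProd_mem (show t ≤ r + 1 by omega)
    have hy' := hg'.partialProd_mem (show t ≤ r + 1 by omega)
    obtain ⟨hycomm, hyfix⟩ := hA.commute_fix hrn (by omega) hy
    have hcomb : ∀ f : ℕ → c.W, Chain c r f →
        c.PosOn (deltaSet n r t) (f (t + 1) * f t) := by
      intro f hf i hi
      rw [c.act_mul]
      exact (hf (t + 1) (by omega)).posOn.pos ((hf t (by omega)).posOn i hi)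
        (c.suppIn_act (hf t (by omega)).1
          (c.suppIn_sroot (deltaSet_mono (by omega) (by omega) hi)))
    have hcomb' : c.PosOn (deltaSet n r t) (g (t + 1) * g t * c.sN (t + 1)) := by
      intro i hi
      have hit := (mem_deltaSet (show t ≤ r by omega)).1 hi
      rw [c.act_mul, hA.act_sN_sroot hrn (by omega) (by omega) (Or.inl (by omega))]
      exact hcomb g hg i hi
    obtain ⟨hmid, hlow⟩ := c.posOn_unique hcomb' (hcomb g' hg') hy hy' (by
      have h1 : g (t + 1) * (g t * partialProd g t) * c.sN (t + 1)
          = g' (t + 1) * (g' t * partialProd g' t) := heq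
      rw [mul_assoc (g' (t + 1)), ← h1, mul_assoc _ (c.sN (t + 1)), ← hycomm]
      simp only [mul_assoc])
    have hlow' : ∀ k < t, g k = g' k := by
      have := (hg.unique_down hg' (j := 0) (x := 1) (one_mem _) t (by omega)
        (by rw [Nat.zero_add, mul_one, hlow])).2
      exact fun k hk => this k (by omega) (by omega)
    have hbound : c.len (g' t) ≤ t + 1 :=
      hA.len_le_of_posOn hrn (by omega) (hg' t (by omega)).1 (hg' t (by omega)).posOn
    by_cases hstrict : c.len (g' t) < c.len (g t) + (t + 1)
    · refine Or.inr ⟨⟨t, by omega⟩, ?_, fun k hk => ?_⟩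
      · simp [grQ]
        omega
      · have hk' : (k : ℕ) < t := hk
        simp [grQ, hlow' k hk', show (k : ℕ) ≠ t + 1 by omega, show (k : ℕ) ≠ t by omega]
    · have hgt : g t = 1 := c.eq_one_of_len (by omega)
      have hlen' : c.len (g' t) = t + 1 := by omega
      have hnp : ¬ Pos (c.act (g (t + 1)) (c.sroot ⟨t + 1, htn⟩)) := by
        have e : partialProd g (t + 1 + 1) = g (t + 1) * (g t * partialProd g t) := rfl
        rwa [e, hgt, one_mul, c.act_mul, hyfix] at hdesc
      rw [hgt, mul_one] at hmid
      obtain ⟨e1, e2⟩ := hA.descent_extreme hrn hjr (hg (t + 1) (by omega))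
        (hg' (t + 1) (by omega)) (hg' t (by omega)).1 hnp hmid
      have hlow'' : ∀ k : Fin (r + 1), (k : ℕ) ≤ t → grQ r (t + 1) k + (c.len (g' k) : ℤ)
          = (c.len (g k) : ℤ) + if (k : ℕ) = t + 1 then 1 else 0 := by
        intro k hk
        rcases hk.lt_or_eq with hk | hk
        · simp [grQ, hlow' k hk, show (k : ℕ) ≠ t + 1 by omega, show (k : ℕ) ≠ t by omega]
        · simp [grQ, hk, hlen', hgt, c.len_one]
      rcases e2.lt_or_eq with hlt | hEq
      · refine Or.inr ⟨⟨t + 1, by omega⟩, ?_, fun k hk => hlow'' k ?_⟩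
        · simp [grQ, e1, c.len_one]
          omega
        · exact Nat.lt_succ_iff.1 hk
      · refine Or.inl (funext fun k => ?_)
        rcases lt_trichotomy (k : ℕ) (t + 1) with hk | hk | hk
        · exact hlow'' k (by omega)
        · simp [grQ, hk, e1, c.len_one]
          omega
        · simp [grQ, hhigh k (by omega) k.2, show (k : ℕ) ≠ t + 1 by omega,
            show (k : ℕ) ≠ t by omega]
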